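/- Combining the pieces: let F̂, F: [0,R_max] → [0,1] be nondecreasing with sup_r |F(r) − F̂(r)| ≤ ε, let γ ≥ 0 be nondecreasing, let m ≥ 1, 0 ≤ k ≤ m, and define R_min = inf{r : F̂(r) ≥ k/m + ε}. Suppose for each r, the 'exceedance probability' q(r) = P[Bin(m, F(r)) ≤ k]. Then ∫_0^{R_max} q(r) γ(r) dr ≤ ∫_{R_min}^{R_max} e^{−m·d_KL(k/m || F̂(r) − ε)} γ(r) dr + γ(R_min)·R_min, provided F̂(r) − ε > k/m for all r > R_min. -/

import Mathlib

open MeasureTheory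

/-- The cdf of a binomial random variable: `P[Bin(m,p) ≤ k]`. -/
noncomputable def binomCdf (m k : ℕ) (p : ℝ) : ℝ :=
  ∑ j ∈ Finset.range (k + 1), (m.choose j : ℝ) * p ^ j * (1 - p) ^ (m - j)

/-- The binary Kullback–Leibler divergence `d_KL(a‖b)`. -/
noncomputable def dKL (a b : ℝ) : ℝ :=
  a * Real.log (a / b) + (1 - a) * Real.log ((1 - a) / (1 - b))

/-! Below `Rmin` the lower tail is bounded by `1`; above it, antitonicity of the binomial cdf and
the Chernoff bound apply. The latter comes from a change of measure: for `j ≤ k` and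
`a = k / m ≤ p`, the likelihood ratio `(a / p) ^ j * ((1 - a) / (1 - p)) ^ (m - j)` of `Bin(m, a)`
to `Bin(m, p)` at `j` is at least its value at `k`, which is `exp (m * dKL a p)`. Hence
`P[Bin(m, p) ≤ k] * exp (m * dKL a p) ≤ P[Bin(m, a) ≤ k] ≤ 1`. -/

lemma exp_natCast_mul_log {n : ℕ} {y : ℝ} (hy : n ≠ 0 → 0 < y) :
    Real.exp (n * Real.log y) = y ^ n := by
  obtain rfl | hn := eq_or_ne n 0
  · simp
  · rw [Real.exp_nat_mul, Real.exp_log (hy hn)]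

section BinomialTail

lemma derivative_sum_bernsteinPolynomial (R : Type*) [CommRing R] (m k : ℕ) :
    Polynomial.derivative (∑ j ∈ Finset.range (k + 1), bernsteinPolynomial R m j) =
      -m * bernsteinPolynomial R (m - 1) k := by
  induction k with
  | zero => simp [bernsteinPolynomial.derivative_zero]
  | succ k ih =>
    rw [Finset.sum_range_succ, Polynomial.derivative_add, ih, bernsteinPolynomial.derivative_succ]
    ring

lemma eval_bernsteinPolynomial_nonneg {R : Type*} [CommRing R] [PartialOrder R] [IsOrderedRing R]
    (m j : ℕ) {p : R} (hp : p ∈ Set.Icc 0 1) : 0 ≤ (bernsteinPolynomial R m j).eval p := by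
  have hp0 : 0 ≤ p := hp.1
  have hp1 : 0 ≤ 1 - p := sub_nonneg.2 hp.2
  simp only [bernsteinPolynomial, Polynomial.eval_mul, Polynomial.eval_natCast,
    Polynomial.eval_pow, Polynomial.eval_X, Polynomial.eval_sub, Polynomial.eval_one]
  positivity

variable (m k : ℕ) {p : ℝ}

lemma binomCdf_eq_eval_sum_bernsteinPolynomial (p : ℝ) :
    binomCdf m k p = (∑ j ∈ Finset.range (k + 1), bernsteinPolynomial ℝ m j).eval p := by
  simp [binomCdf, bernsteinPolynomial, Polynomial.eval_finsetSum]

lemma hasDerivAt_binomCdf (p : ℝ) :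
    HasDerivAt (binomCdf m k) (-m * (bernsteinPolynomial ℝ (m - 1) k).eval p) p := by
  rw [funext (binomCdf_eq_eval_sum_bernsteinPolynomial m k)]
  have hderiv := (∑ j ∈ Finset.range (k + 1), bernsteinPolynomial ℝ m j).hasDerivAt p
  rw [derivative_sum_bernsteinPolynomial] at hderiv
  simpa using hderiv

lemma antitoneOn_binomCdf : AntitoneOn (binomCdf m k) (Set.Icc 0 1) := by
  have hderiv := hasDerivAt_binomCdf m k
  refine antitoneOn_of_deriv_nonpos (convex_Icc 0 1)
    (fun p _ => (hderiv p).continuousAt.continuousWithinAt)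
    (fun p _ => (hderiv p).differentiableAt.differentiableWithinAt) fun p hp => ?_
  rw [(hderiv p).deriv]
  exact mul_nonpos_of_nonpos_of_nonneg (neg_nonpos.2 m.cast_nonneg)
    (eval_bernsteinPolynomial_nonneg _ _ (interior_subset hp))

lemma binomCdf_zero_right : binomCdf m k 0 = 1 := by
  simp [binomCdf, Finset.sum_range_succ']

lemma binomCdf_le_one (hp : p ∈ Set.Icc (0 : ℝ) 1) : binomCdf m k p ≤ 1 :=
  binomCdf_zero_right m k ▸ antitoneOn_binomCdf m k (Set.left_mem_Icc.2 zero_le_one) hp hp.1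

lemma binomCdf_mul_likelihoodRatio_le {a : ℝ} (ha : 0 ≤ a) (hap : a ≤ p) (hp0 : 0 < p)
    (hp1 : p < 1) :
    binomCdf m k p * ((a / p) ^ k * ((1 - a) / (1 - p)) ^ (m - k)) ≤ binomCdf m k a := by
  have hp' : 0 < 1 - p := sub_pos.2 hp1
  have hsuccess : a / p ≤ 1 := (div_le_one hp0).2 hap
  have hfailure : 1 ≤ (1 - a) / (1 - p) := (one_le_div hp').2 (by linarith)
  rw [binomCdf, binomCdf, Finset.sum_mul]
  refine Finset.sum_le_sum fun j hj => ?_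
  have hjk : j ≤ k := Finset.mem_range_succ_iff.1 hj
  calc (m.choose j : ℝ) * p ^ j * (1 - p) ^ (m - j) *
        ((a / p) ^ k * ((1 - a) / (1 - p)) ^ (m - k))
      ≤ (m.choose j : ℝ) * p ^ j * (1 - p) ^ (m - j) *
        ((a / p) ^ j * ((1 - a) / (1 - p)) ^ (m - j)) := by
        gcongr ?_ * (?_ * ?_)
        · exact pow_le_pow_of_le_one (by positivity) hsuccess hjk
        · exact pow_le_pow_right₀ hfailure (by lia)
    _ = (m.choose j : ℝ) * (p * (a / p)) ^ j * ((1 - p) * ((1 - a) / (1 - p))) ^ (m - j) := by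
        rw [mul_pow, mul_pow]
        ring
    _ = (m.choose j : ℝ) * a ^ j * (1 - a) ^ (m - j) := by
        rw [mul_div_cancel₀ _ hp0.ne', mul_div_cancel₀ _ hp'.ne']

variable {m k}

lemma binomCdf_one_right (hkm : k < m) : binomCdf m k 1 = 0 := by
  refine Finset.sum_eq_zero fun j hj => ?_
  have hjm : m - j ≠ 0 := by grind
  simp [hjm]

lemma exp_mul_dKL_div (hm : 0 < m) (hkm : k ≤ m) (hp0 : 0 < p) (hp1 : p < 1) :
    Real.exp (m * dKL ((k : ℝ) / m) p) =
      ((k : ℝ) / m / p) ^ k * ((1 - (k : ℝ) / m) / (1 - p)) ^ (m - k) := by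
  have hm' : (0 : ℝ) < m := Nat.cast_pos.2 hm
  have hp' : 0 < 1 - p := sub_pos.2 hp1
  have hsuccess (hk : k ≠ 0) : 0 < (k : ℝ) / m / p := by positivity
  have hfailure (hk : m - k ≠ 0) : 0 < (1 - (k : ℝ) / m) / (1 - p) := by
    have hlt : (k : ℝ) < m := Nat.cast_lt.2 (by lia)
    exact div_pos (sub_pos.2 ((div_lt_one hm').2 hlt)) hp'
  rw [← exp_natCast_mul_log hsuccess, ← exp_natCast_mul_log hfailure, ← Real.exp_add, dKL,
    Nat.cast_sub hkm]
  congr 1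
  field_simp

lemma binomCdf_le_exp_neg_mul_dKL (hm : 0 < m) (hkp : (k : ℝ) / m < p) (hp1 : p ≤ 1) :
    binomCdf m k p ≤ Real.exp (-(m : ℝ) * dKL ((k : ℝ) / m) p) := by
  have hm' : (0 : ℝ) < m := Nat.cast_pos.2 hm
  have ha : 0 ≤ (k : ℝ) / m := by positivity
  have hkm : k < m := Nat.cast_lt.1 ((div_lt_one hm').1 (hkp.trans_le hp1))
  obtain rfl | hp1 := hp1.eq_or_lt
  · -- Here the divergence is infinite, whereas `dKL` has a finite junk value; the tail is zero.
    exact (binomCdf_one_right hkm).trans_le (Real.exp_nonneg _)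
  have hp0 : 0 < p := ha.trans_lt hkp
  rw [neg_mul, Real.exp_neg, ← one_div, le_div_iff₀ (Real.exp_pos _),
    exp_mul_dKL_div hm hkm.le hp0 hp1]
  exact (binomCdf_mul_likelihoodRatio_le m k ha hkp.le hp0 hp1).trans
    (binomCdf_le_one m k ⟨ha, hkp.le.trans hp1.le⟩)

end BinomialTail

lemma integral_le_integral_add_mul_sub {a b c C : ℝ} {f g : ℝ → ℝ} (hac : a ≤ c) (hcb : c ≤ b)
    (hf : IntervalIntegrable f volume a b) (hg : IntervalIntegrable g volume c b)
    (hfC : ∀ r ∈ Set.Icc a c, f r ≤ C) (hfg : ∀ r ∈ Set.Ioo c b, f r ≤ g r) :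
    ∫ r in a..b, f r ≤ (∫ r in c..b, g r) + C * (c - a) := by
  have hc : c ∈ Set.uIcc a b := Set.mem_uIcc_of_le hac hcb
  have hleft : IntervalIntegrable f volume a c := hf.mono_set (Set.uIcc_subset_uIcc_left hc)
  have hright : IntervalIntegrable f volume c b := hf.mono_set (Set.uIcc_subset_uIcc_right hc)
  calc ∫ r in a..b, f r = (∫ r in c..b, f r) + ∫ r in a..c, f r := by
        rw [add_comm, intervalIntegral.integral_add_adjacent_intervals hleft hright]
    _ ≤ (∫ r in c..b, g r) + ∫ _ in a..c, C :=
        add_le_add (intervalIntegral.integral_mono_on_of_le_Ioo hcb hright hg hfg)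
          (intervalIntegral.integral_mono_on hac hleft intervalIntegrable_const hfC)
    _ = (∫ r in c..b, g r) + C * (c - a) := by
        rw [intervalIntegral.integral_const, smul_eq_mul, mul_comm]

theorem stmt_15_general {Rmax R : ℝ} (hR : R ∈ Set.Icc 0 Rmax) {F G γ : ℝ → ℝ} {m k : ℕ}
    (hm : 0 < m) (hF01 : ∀ r ∈ Set.Icc 0 Rmax, F r ∈ Set.Icc (0 : ℝ) 1)
    (hGF : ∀ r ∈ Set.Ioo R Rmax, G r ≤ F r) (hkG : ∀ r ∈ Set.Ioo R Rmax, (k : ℝ) / m < G r)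
    (hγ0 : ∀ r ∈ Set.Icc 0 Rmax, 0 ≤ γ r) (hγmono : MonotoneOn γ (Set.Icc 0 R))
    (hint : IntervalIntegrable (fun r => binomCdf m k (F r) * γ r) volume 0 Rmax)
    (hint' : IntervalIntegrable
      (fun r => Real.exp (-(m : ℝ) * dKL ((k : ℝ) / m) (G r)) * γ r) volume R Rmax) :
    ∫ r in (0 : ℝ)..Rmax, binomCdf m k (F r) * γ r ≤
      (∫ r in R..Rmax, Real.exp (-(m : ℝ) * dKL ((k : ℝ) / m) (G r)) * γ r) + γ R * R := by
  have hleft : ∀ r ∈ Set.Icc 0 R, binomCdf m k (F r) * γ r ≤ γ R := fun r hr => by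
    have hrI : r ∈ Set.Icc 0 Rmax := ⟨hr.1, hr.2.trans hR.2⟩
    exact (mul_le_of_le_one_left (hγ0 r hrI) (binomCdf_le_one m k (hF01 r hrI))).trans
      (hγmono hr (Set.right_mem_Icc.2 hR.1) hr.2)
  have hright : ∀ r ∈ Set.Ioo R Rmax, binomCdf m k (F r) * γ r ≤
      Real.exp (-(m : ℝ) * dKL ((k : ℝ) / m) (G r)) * γ r := fun r hr => by
    have hrI : r ∈ Set.Icc 0 Rmax := ⟨hR.1.trans hr.1.le, hr.2.le⟩
    have hG0 : 0 ≤ G r := (by positivity : (0 : ℝ) ≤ k / m).trans (hkG r hr).le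
    have hG1 : G r ≤ 1 := (hGF r hr).trans (hF01 r hrI).2
    refine mul_le_mul_of_nonneg_right ?_ (hγ0 r hrI)
    calc binomCdf m k (F r) ≤ binomCdf m k (G r) :=
          antitoneOn_binomCdf m k ⟨hG0, hG1⟩ (hF01 r hrI) (hGF r hr)
      _ ≤ Real.exp (-(m : ℝ) * dKL ((k : ℝ) / m) (G r)) :=
          binomCdf_le_exp_neg_mul_dKL hm (hkG r hr) hG1
  simpa only [sub_zero] using
    integral_le_integral_add_mul_sub hR.1 hR.2 hint hint' hleft hright

/-- Combining the pieces: with `sup |F − F̂| ≤ ε`, `γ ≥ 0` nondecreasing,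
`R_min = inf{r : F̂(r) ≥ k/m + ε}`, and `q(r) = P[Bin(m, F(r)) ≤ k]`, one has
`∫_0^{R_max} q γ ≤ ∫_{R_min}^{R_max} e^{−m d_KL(k/m ‖ F̂(r)−ε)} γ + γ(R_min) R_min`,
provided `F̂(r) − ε > k/m` for all `r > R_min`. -/
theorem stmt_15 (Rmax : ℝ) (hRmax : 0 < Rmax)
    (F Fhat : ℝ → ℝ) (ε : ℝ) (hε : 0 ≤ ε)
    (hFmono : MonotoneOn F (Set.Icc 0 Rmax)) (hFhatmono : MonotoneOn Fhat (Set.Icc 0 Rmax))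
    (hF01 : ∀ r ∈ Set.Icc (0:ℝ) Rmax, F r ∈ Set.Icc (0:ℝ) 1)
    (hFhat01 : ∀ r ∈ Set.Icc (0:ℝ) Rmax, Fhat r ∈ Set.Icc (0:ℝ) 1)
    (hclose : ∀ r ∈ Set.Icc (0:ℝ) Rmax, |F r - Fhat r| ≤ ε)
    (γ : ℝ → ℝ) (hγ0 : ∀ r, 0 ≤ γ r) (hγmono : MonotoneOn γ (Set.Icc 0 Rmax))
    (m k : ℕ) (hm : 1 ≤ m) (hk : k ≤ m)
    (Rmin : ℝ)
    (hRmin : Rmin = sInf {r | r ∈ Set.Icc (0:ℝ) Rmax ∧ (k : ℝ) / m + ε ≤ Fhat r})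
    (hRminIcc : Rmin ∈ Set.Icc (0:ℝ) Rmax)
    (hstrict : ∀ r, Rmin < r → r ≤ Rmax → (k : ℝ) / m < Fhat r - ε)
    (q : ℝ → ℝ) (hq : ∀ r, q r = binomCdf m k (F r))
    (hint1 : IntervalIntegrable (fun r => q r * γ r) volume 0 Rmax)
    (hint2 : IntervalIntegrable
      (fun r => Real.exp (-(m : ℝ) * dKL ((k : ℝ) / m) (Fhat r - ε)) * γ r) volume Rmin Rmax) :
    ∫ r in (0:ℝ)..Rmax, q r * γ r ≤
      (∫ r in Rmin..Rmax, Real.exp (-(m : ℝ) * dKL ((k : ℝ) / m) (Fhat r - ε)) * γ r) +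
        γ Rmin * Rmin := by
  obtain rfl : q = fun r => binomCdf m k (F r) := funext hq
  exact stmt_15_general hRminIcc hm hF01
    (fun r hr => by linarith [(abs_le.1 (hclose r ⟨hRminIcc.1.trans hr.1.le, hr.2.le⟩)).1])
    (fun r hr => hstrict r hr.1 hr.2.le) (fun r _ => hγ0 r)
    (hγmono.mono (Set.Icc_subset_Icc_right hRminIcc.2)) hint1 hint2
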